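/- Let l and m be fixed positive integers. There exists a constant C > 0 such that for every integer k > l and every integer r with m ≤ r < k + m, the number of tuples a ∈ A_{k,l,m} whose associated polynomial satisfies p_a(r) = 0 is at most C·k^{l−1}. -/

import Mathlib

noncomputable section

/-- The falling factorial `(x)_j = x (x-1) ⋯ (x-j+1)`, with `(x)_0 = 1`. -/
def fall (x : ℤ) (j : ℕ) : ℤ := ∏ i ∈ Finset.range j, (x - (i : ℤ))

/-- `a ∈ A_{k,l,m}`: an `(l+1)`-tuple of nonnegative integers with
`∑_{j=0}^{l} (j+m) a_j = k + m`. -/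
def memA (k l m : ℕ) (a : Fin (l + 1) → ℕ) : Prop :=
  ∑ j : Fin (l + 1), ((j : ℕ) + m) * a j = k + m

/-- The polynomial
`p_a(x) = (x-m)_k - (-1)^k (k+m-1)_{k-l} ∑_{j=0}^{l} (-1)^j a_j (l+m-1)_{l-j} (x-m)_j`
associated to `a ∈ A_{k,l,m}`. -/
def pA (k l m : ℕ) (a : Fin (l + 1) → ℕ) (x : ℤ) : ℤ :=
  fall (x - (m : ℤ)) k -
    (-1 : ℤ) ^ k * fall ((k : ℤ) + (m : ℤ) - 1) (k - l) *
      ∑ j : Fin (l + 1), (-1 : ℤ) ^ (j : ℕ) * (a j : ℤ) * fall ((l : ℤ) + (m : ℤ) - 1) (l - (j : ℕ))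
        * fall (x - (m : ℤ)) (j : ℕ)

theorem fall_pos (x : ℤ) (j : ℕ) (h : (j : ℤ) ≤ x) : 0 < fall x j := by
  unfold fall
  apply Finset.prod_pos
  intro i hi
  have := Finset.mem_range.1 hi
  omega

theorem fall_zero (x : ℤ) (j : ℕ) (h0 : 0 ≤ x) (h : x < j) : fall x j = 0 := by
  unfold fall
  apply Finset.prod_eq_zero (i := x.toNat)
  · rw [Finset.mem_range]; omega
  · omega

theorem memA_le {k l m : ℕ} (hm : 0 < m) {a : Fin (l + 1) → ℕ} (h : memA k l m a)
    (j : Fin (l + 1)) : a j < k + m + 1 := by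
  unfold memA at h
  have h1 : ((j : ℕ) + m) * a j ≤ k + m := by
    rw [← h]
    exact Finset.single_le_sum (f := fun j : Fin (l + 1) => ((j : ℕ) + m) * a j)
      (fun _ _ => Nat.zero_le _) (Finset.mem_univ j)
  have h2 : 1 * a j ≤ ((j : ℕ) + m) * a j := Nat.mul_le_mul_right _ (by omega)
  omega

theorem root_eq {k l m : ℕ} (hm : 0 < m) (hlk : l < k) {a : Fin (l + 1) → ℕ} {r : ℤ}
    (h1 : (m : ℤ) ≤ r) (h2 : r < (k : ℤ) + m) (h : pA k l m a r = 0) :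
    ∑ j : Fin (l + 1), (-1 : ℤ) ^ (j : ℕ) * (a j : ℤ) * fall ((l : ℤ) + (m : ℤ) - 1) (l - (j : ℕ))
        * fall (r - (m : ℤ)) (j : ℕ) = 0 := by
  unfold pA at h
  rw [fall_zero (r - m) k (by omega) (by omega), zero_sub, neg_eq_zero] at h
  rcases mul_eq_zero.1 h with h | h
  · have := fall_pos ((k : ℤ) + (m : ℤ) - 1) (k - l) (by omega)
    rcases mul_eq_zero.1 h with h | h
    · exact absurd h (pow_ne_zero _ (by norm_num))
    · omega
  · exact h

theorem pair_unique {n k m : ℕ} (hm : 0 < m) (hlk : n + 1 < k) {a b : Fin (n + 1 + 1) → ℕ} {r : ℤ}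
    (h1 : (m : ℤ) ≤ r) (h2 : r < (k : ℤ) + m)
    (ha : memA k (n + 1) m a) (hb : memA k (n + 1) m b)
    (pa : pA k (n + 1) m a r = 0) (pb : pA k (n + 1) m b r = 0)
    (hab : ∀ i : Fin n, a i.succ.succ = b i.succ.succ) : a = b := by
  have qa := root_eq hm hlk h1 h2 pa
  have qb := root_eq hm hlk h1 h2 pb
  unfold memA at ha hb
  rw [Fin.sum_univ_succ, Fin.sum_univ_succ] at ha hb qa qb
  simp only [hab] at ha qa
  have e1 : (m : ℤ) * a 0 + (1 + m) * a 1 = m * b 0 + (1 + m) * b 1 := by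
    have := ha.trans hb.symm
    simp only [← add_assoc] at this
    have := Nat.add_right_cancel this
    simp at this
    exact_mod_cast this
  have e2 := qa.trans qb.symm
  simp only [← add_assoc] at e2
  replace e2 := add_right_cancel e2
  have P := fall_pos (((n + 1 : ℕ) : ℤ) + (m : ℤ) - 1) (n + 1) (by omega)
  have Q := fall_pos (((n + 1 : ℕ) : ℤ) + (m : ℤ) - 1) n (by omega)
  have f0 : fall (r - m) 0 = 1 := by simp [fall]
  have f1 : fall (r - m) 1 = r - m := by simp [fall]
  simp only [Fin.succ_zero_eq_one, Fin.val_zero, Fin.val_one, pow_zero, pow_one, f0, f1,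
    Nat.sub_zero, Nat.add_sub_cancel] at e2
  generalize fall (((n + 1 : ℕ) : ℤ) + (m : ℤ) - 1) (n + 1) = p at *
  generalize fall (((n + 1 : ℕ) : ℤ) + (m : ℤ) - 1) n = q at *
  have hm' : (0 : ℤ) < m := by exact_mod_cast hm
  have key : ((a 1 : ℤ) - b 1) * ((m + 1) * p + m * (q * (r - m))) = 0 := by
    linear_combination p * e1 - m * e2
  have hpos : 0 < ((m : ℤ) + 1) * p + m * (q * (r - m)) := by
    have : 0 ≤ r - m := by omega
    positivity
  have y1 : (a 1 : ℤ) = b 1 := by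
    rcases mul_eq_zero.1 key with h | h
    · omega
    · omega
  rw [y1] at e1
  have y0 : (a 0 : ℤ) = b 0 := mul_left_cancel₀ hm'.ne' (add_right_cancel e1)
  funext j
  refine Fin.cases (by exact_mod_cast y0) (fun j => ?_) j
  refine Fin.cases (by exact_mod_cast y1) (fun j => hab j) j

/-- For fixed `l, m`, the number of `a ∈ A_{k,l,m}` for which a given
integer `r ∈ [m, k+m)` is a root of `p_a` is `O_{l,m}(k^{l-1})`. -/
theorem count_small_root
    (l m : ℕ) (hl : 0 < l) (hm : 0 < m) :
    ∃ C : ℝ, 0 < C ∧ ∀ k : ℕ, l < k → ∀ r : ℤ, (m : ℤ) ≤ r → r < (k : ℤ) + m →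
      (Nat.card {a : Fin (l + 1) → ℕ // memA k l m a ∧ pA k l m a r = 0} : ℝ) ≤
        C * (k : ℝ) ^ (l - 1) := by
  obtain ⟨n, rfl⟩ : ∃ n, l = n + 1 := ⟨l - 1, by omega⟩
  refine ⟨((m : ℝ) + 2) ^ n, by positivity, fun k hk r h1 h2 => ?_⟩
  let f : {a : Fin (n + 1 + 1) → ℕ // memA k (n + 1) m a ∧ pA k (n + 1) m a r = 0} →
      (Fin n → Fin (k + m + 1)) :=
    fun a i => ⟨a.1 i.succ.succ, memA_le hm a.2.1 _⟩
  have hf : Function.Injective f := by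
    intro a b hab
    apply Subtype.ext
    refine pair_unique hm hk h1 h2 a.2.1 b.2.1 a.2.2 b.2.2 (fun i => ?_)
    exact congrArg Fin.val (congrFun hab i)
  have hc := Nat.card_le_card_of_injective f hf
  simp only [Nat.card_eq_fintype_card, Fintype.card_fun, Fintype.card_fin] at hc
  have h3 : (k + m + 1) ^ n ≤ ((m + 2) * k) ^ n := by
    apply Nat.pow_le_pow_left
    nlinarith
  rw [Nat.add_sub_cancel, ← mul_pow]
  exact_mod_cast hc.trans h3
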